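/- In the group G presented by generators a, b with relations aba = bab and abba = 1, the images of a and b each have order exactly 4, and the image of c = ab⁻¹ has order exactly 3. -/

import Mathlib

/-- The relators `a b a b⁻¹ a⁻¹ b⁻¹` (i.e. `aba = bab`) and `a b b a` (i.e. `abba = 1`),
where `a` and `b` are the two generators of the free group on two generators. -/
def bbRels : Set (FreeGroup (Fin 2)) :=
  {FreeGroup.of 0 * FreeGroup.of 1 * FreeGroup.of 0 *
      (FreeGroup.of 1)⁻¹ * (FreeGroup.of 0)⁻¹ * (FreeGroup.of 1)⁻¹,
   FreeGroup.of 0 * FreeGroup.of 1 * FreeGroup.of 1 * FreeGroup.of 0}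

/-!
The relation `abba = 1` says `b² = a⁻²`, so `a²` commutes with `b`, while `aba = bab` says that
conjugation by `aba` takes `a` to `b`. Conjugating `a²` by `aba` therefore gives `b² = a²`, and
hence `a⁴ = b⁴ = 1`. Moreover `(ab)³ = (aba)² = a²(abba) = a²` and `ab⁻¹ = (ab)a²`, so
`(ab⁻¹)³ = a² · a⁶ = 1`. These orders are attained under the homomorphism `a ↦ x`, `b ↦ xr²` to the
dicyclic group `⟨r, x | r⁶ = 1, x² = r³, x⁻¹rx = r⁻¹⟩` of order `12`.
-/

theorem orderOf_eq_of_map_of_pow_eq_one {M N : Type*} [Monoid M] [Monoid N] (f : M →* N) {x : M}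
    {n : ℕ} (hmap : orderOf (f x) = n) (hpow : x ^ n = 1) : orderOf x = n :=
  Nat.dvd_antisymm (orderOf_dvd_of_pow_eq_one hpow) (hmap ▸ orderOf_map_dvd f x)

theorem semiconjBy_of_braid {S : Type*} [Semigroup S] {a b : S} (hbraid : a * b * a = b * a * b) :
    SemiconjBy (a * b * a) a b := by
  simp only [SemiconjBy, ← mul_assoc, ← hbraid]

theorem sq_eq_sq_of_braid {M : Type*} [RightCancelMonoid M] {a b : M}
    (hbraid : a * b * a = b * a * b) (hcomm : Commute (a ^ 2) b) : b ^ 2 = a ^ 2 := by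
  have hconj : SemiconjBy (a * b * a) (a ^ 2) (b ^ 2) := (semiconjBy_of_braid hbraid).pow_right 2
  have ha : Commute (a ^ 2) a := Commute.pow_self a 2
  have hfix : Commute (a ^ 2) (a * b * a) := (ha.mul_right hcomm).mul_right ha
  exact mul_right_cancel (hconj.eq.symm.trans hfix.eq.symm)

theorem mul_pow_three_of_braid {M : Type*} [Monoid M] {a b : M}
    (hbraid : a * b * a = b * a * b) (hcomm : Commute (a ^ 2) b) :
    (a * b) ^ 3 = a ^ 2 * (a * b * b * a) := by
  calc (a * b) ^ 3 = (a * b * a) * (b * a * b) := by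
        simp only [pow_succ, pow_zero, one_mul, mul_assoc]
    _ = (a * b * a) * (a * b * a) := by rw [hbraid]
    _ = a * (b * a ^ 2) * (b * a) := by simp only [sq, mul_assoc]
    _ = a * (a ^ 2 * b) * (b * a) := by rw [hcomm.eq]
    _ = a ^ 2 * (a * b * b * a) := by simp only [sq, mul_assoc]

section DedekindFinite

variable {M : Type*} [Monoid M] [IsDedekindFiniteMonoid M] {a b : M}

theorem mul_mul_mul_eq_one_swap (habba : a * b * b * a = 1) : b * a * a * b = 1 := by
  rw [mul_assoc] at habba ⊢
  exact mul_eq_one_symm habba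

theorem sq_mul_sq_eq_one (habba : a * b * b * a = 1) : b ^ 2 * a ^ 2 = 1 := by
  have hbbaa : b * b * a * a = 1 := mul_eq_one_symm (by simpa only [mul_assoc] using habba)
  rwa [sq, sq, ← mul_assoc]

end DedekindFinite

section Group

variable {G : Type*} [Group G] {a b : G}

theorem commute_sq_of_mul_mul_mul_eq_one (habba : a * b * b * a = 1) : Commute (a ^ 2) b := by
  rw [← Commute.inv_left_iff, ← eq_inv_of_mul_eq_one_left (sq_mul_sq_eq_one habba)]
  exact Commute.pow_self b 2

theorem pow_four_eq_one_of_braid (hbraid : a * b * a = b * a * b) (habba : a * b * b * a = 1) :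
    a ^ 4 = 1 := by
  have hsq : b ^ 2 = a ^ 2 := sq_eq_sq_of_braid hbraid (commute_sq_of_mul_mul_mul_eq_one habba)
  calc a ^ 4 = a ^ 2 * a ^ 2 := pow_add a 2 2
    _ = b ^ 2 * a ^ 2 := by rw [hsq]
    _ = 1 := sq_mul_sq_eq_one habba

theorem mul_inv_pow_three_eq_one_of_braid (hbraid : a * b * a = b * a * b)
    (habba : a * b * b * a = 1) : (a * b⁻¹) ^ 3 = 1 := by
  have hcomm : Commute (a ^ 2) b := commute_sq_of_mul_mul_mul_eq_one habba
  have hab : Commute (a * b) (a ^ 2) := ((Commute.pow_self a 2).mul_right hcomm).symm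
  have hinv : b⁻¹ = b * a ^ 2 := by
    rw [inv_eq_iff_mul_eq_one, ← mul_assoc, ← sq, sq_mul_sq_eq_one habba]
  calc (a * b⁻¹) ^ 3 = (a * b * a ^ 2) ^ 3 := by rw [hinv, mul_assoc]
    _ = a ^ 2 * (a ^ 2) ^ 3 := by
        rw [hab.mul_pow, mul_pow_three_of_braid hbraid hcomm, habba, mul_one]
    _ = (a ^ 4) ^ 2 := by group
    _ = 1 := by rw [pow_four_eq_one_of_braid hbraid habba, one_pow]

theorem lift_eq_one_of_mem_bbRels (hbraid : a * b * a = b * a * b) (habba : a * b * b * a = 1) :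
    ∀ r ∈ bbRels, FreeGroup.lift ![a, b] r = 1 := by
  rintro r (rfl | rfl)
  · simp [hbraid]
  · simpa using habba

end Group

theorem presentedGroup_bbRels_braid :
    PresentedGroup.of (rels := bbRels) 0 * PresentedGroup.of 1 * PresentedGroup.of 0 =
      PresentedGroup.of 1 * PresentedGroup.of 0 * PresentedGroup.of 1 := by
  have h := PresentedGroup.one_of_mem (rels := bbRels) (Or.inl rfl)
  simp only [map_mul, map_inv, mul_inv_eq_iff_eq_mul, one_mul] at h
  exact h

theorem presentedGroup_bbRels_mul_mul_mul_eq_one :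
    PresentedGroup.of (rels := bbRels) 0 * PresentedGroup.of 1 * PresentedGroup.of 1 *
      PresentedGroup.of 0 = 1 :=
  PresentedGroup.one_of_mem (Or.inr rfl)

/-- The homomorphism to the dicyclic group of order `12` (Mathlib's `QuaternionGroup 3`), where
`xa i` stands for `xrⁱ` with `r` the element of order `6`. The orders of the images bound the orders
in the presented group from below. -/
def bbToQuaternionGroup : PresentedGroup bbRels →* QuaternionGroup 3 :=
  PresentedGroup.toGroup
    (lift_eq_one_of_mem_bbRels (a := QuaternionGroup.xa 0) (b := QuaternionGroup.xa 2)
      (by decide) (by decide))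

theorem bbToQuaternionGroup_of_zero :
    bbToQuaternionGroup (PresentedGroup.of 0) = QuaternionGroup.xa 0 :=
  PresentedGroup.toGroup.of _

theorem bbToQuaternionGroup_of_one :
    bbToQuaternionGroup (PresentedGroup.of 1) = QuaternionGroup.xa 2 :=
  PresentedGroup.toGroup.of _

theorem orderOf_bbToQuaternionGroup_mul_inv :
    orderOf (bbToQuaternionGroup (PresentedGroup.of 0 * (PresentedGroup.of 1)⁻¹)) = 3 := by
  rw [map_mul, map_inv, bbToQuaternionGroup_of_zero, bbToQuaternionGroup_of_one]
  exact orderOf_eq_prime (by decide) (by decide)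

/-- In the group presented by generators `a, b` with relations `aba = bab` and
`abba = 1`, the images of `a` and `b` each have order exactly 4, and the image
of `c = ab⁻¹` has order exactly 3. -/
theorem presented_orders :
    orderOf (PresentedGroup.of (rels := bbRels) 0) = 4 ∧
      orderOf (PresentedGroup.of (rels := bbRels) 1) = 4 ∧
      orderOf
        (PresentedGroup.of (rels := bbRels) 0 * (PresentedGroup.of (rels := bbRels) 1)⁻¹) = 3 := by
  have hbraid := presentedGroup_bbRels_braid
  have habba := presentedGroup_bbRels_mul_mul_mul_eq_one
  refine ⟨orderOf_eq_of_map_of_pow_eq_one bbToQuaternionGroup ?_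
      (pow_four_eq_one_of_braid hbraid habba),
    orderOf_eq_of_map_of_pow_eq_one bbToQuaternionGroup ?_
      (pow_four_eq_one_of_braid hbraid.symm (mul_mul_mul_eq_one_swap habba)),
    orderOf_eq_of_map_of_pow_eq_one bbToQuaternionGroup orderOf_bbToQuaternionGroup_mul_inv
      (mul_inv_pow_three_eq_one_of_braid hbraid habba)⟩
  · rw [bbToQuaternionGroup_of_zero, QuaternionGroup.orderOf_xa]
  · rw [bbToQuaternionGroup_of_one, QuaternionGroup.orderOf_xa]
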